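/- (Gyöngy–Krylov characterization) Let X be a complete separable metric space and {Y_n}_{n≥0} a sequence of X-valued random variables on a probability space (Ω,𝓕,ℙ). Let μ_{m,n}(E) := ℙ{(Y_n,Y_m) ∈ E} for E ∈ 𝓑(X×X) be the joint laws. Then {Y_n}_{n≥1} converges in probability if and only if for every subsequence {μ_{m_k,n_k}}_{k≥1} of the joint probability laws there exists a further subsequence converging weakly to a probability measure μ on X×X such that μ{(u,v) ∈ X×X : u = v} = 1. -/

import Mathlib

/- STATEMENT 17 (Lemma 5.2, Gyöngy–Krylov characterization of convergence in
   probability via joint laws). -/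

noncomputable section
open MeasureTheory Filter Topology

namespace Stmt17

/-- weak convergence of measures, tested against bounded continuous functions -/
def WeakTendsto {X : Type*} [TopologicalSpace X] [MeasurableSpace X]
    (μ : ℕ → Measure X) (ν : Measure X) : Prop :=
  ∀ f : BoundedContinuousFunction X ℝ,
    Tendsto (fun k => ∫ x, f x ∂(μ k)) atTop (𝓝 (∫ x, f x ∂ν))

section Helpers
variable {X : Type*} [MetricSpace X] [CompleteSpace X] [TopologicalSpace.SeparableSpace X]
    [MeasurableSpace X] [BorelSpace X]
    {Ω : Type*} [MeasurableSpace Ω]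

/-- the truncated distance as a bounded continuous function -/
def truncDist (X : Type*) [MetricSpace X] (ε : ℝ) (hε : 0 < ε) :
    BoundedContinuousFunction (X × X) ℝ :=
  BoundedContinuousFunction.ofNormedAddCommGroup (fun p => min ε (dist p.1 p.2))
    (by fun_prop) ε (by
      intro p
      rw [Real.norm_of_nonneg (le_min hε.le dist_nonneg)]
      exact min_le_left _ _)

theorem gk_forward (P : Measure Ω) [IsProbabilityMeasure P]
    (Y : ℕ → Ω → X) (hY : ∀ n, Measurable (Y n)) (Z : Ω → X)
    (hZ : TendstoInMeasure P Y atTop Z) (nk mk : ℕ → ℕ) (hn : StrictMono nk)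
    (hm : StrictMono mk) :
    ∃ φ : ℕ → ℕ, StrictMono φ ∧
          ∃ μ : Measure (X × X), IsProbabilityMeasure μ ∧
            WeakTendsto
              (fun k => P.map (fun ω => (Y (nk (φ k)) ω, Y (mk (φ k)) ω))) μ ∧
            μ {p : X × X | p.1 = p.2} = 1 := by
  have : SecondCountableTopology X := UniformSpace.secondCountable_of_separable X
  have hZm : AEMeasurable Z P := hZ.aemeasurable (fun n => (hY n).aemeasurable)
  obtain ⟨a, ha, ha'⟩ := (hZ.comp hn.tendsto_atTop).exists_seq_tendsto_ae
  obtain ⟨b, hb, hb'⟩ := (hZ.comp (hm.comp ha).tendsto_atTop).exists_seq_tendsto_ae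
  have hpair : AEMeasurable (fun ω => (Z ω, Z ω)) P := hZm.prodMk hZm
  refine ⟨a ∘ b, ha.comp hb, P.map (fun ω => (Z ω, Z ω)),
    Measure.isProbabilityMeasure_map hpair, ?_, ?_⟩
  · intro f
    rw [integral_map hpair f.continuous.aestronglyMeasurable]
    have : ∀ k, ∫ x, f x ∂(P.map (fun ω => (Y (nk ((a ∘ b) k)) ω, Y (mk ((a ∘ b) k)) ω)))
        = ∫ ω, f (Y (nk ((a ∘ b) k)) ω, Y (mk ((a ∘ b) k)) ω) ∂P := fun k =>
      integral_map ((hY _).prodMk (hY _)).aemeasurable f.continuous.aestronglyMeasurable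
    simp_rw [this]
    refine tendsto_integral_of_dominated_convergence (fun _ => ‖f‖) ?_
      (integrable_const _) ?_ ?_
    · intro k
      exact (f.continuous.measurable.comp ((hY _).prodMk (hY _))).aestronglyMeasurable
    · intro k
      exact Eventually.of_forall fun ω => f.norm_coe_le_norm _
    · filter_upwards [ha', hb'] with ω h1 h2
      exact (f.continuous.tendsto _).comp ((h1.comp hb.tendsto_atTop).prodMk_nhds h2)
  · rw [Measure.map_apply_of_aemeasurable hpair
      (isClosed_eq continuous_fst continuous_snd).measurableSet]
    simp

theorem gk_cauchy (P : Measure Ω) [IsProbabilityMeasure P]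
    (Y : ℕ → Ω → X) (hY : ∀ n, Measurable (Y n))
    (H : ∀ nk mk : ℕ → ℕ, StrictMono nk → StrictMono mk →
        ∃ φ : ℕ → ℕ, StrictMono φ ∧
          ∃ μ : Measure (X × X), IsProbabilityMeasure μ ∧
            WeakTendsto
              (fun k => P.map (fun ω => (Y (nk (φ k)) ω, Y (mk (φ k)) ω))) μ ∧
            μ {p : X × X | p.1 = p.2} = 1)
    (ε δ : ℝ) (hε : 0 < ε) (hδ : 0 < δ) :
    ∃ N, ∀ n ≥ N, ∀ m ≥ N, P.real {ω | ε ≤ dist (Y n ω) (Y m ω)} ≤ δ := by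
  have : SecondCountableTopology X := UniformSpace.secondCountable_of_separable X
  by_contra! hcon
  choose n hn m hm hnm using hcon
  have tn : Tendsto n atTop atTop := tendsto_atTop_mono hn tendsto_id
  have tm : Tendsto m atTop atTop := tendsto_atTop_mono hm tendsto_id
  obtain ⟨a, ha, ha'⟩ := strictMono_subseq_of_tendsto_atTop tn
  obtain ⟨b, hb, hb'⟩ := strictMono_subseq_of_tendsto_atTop (tm.comp ha.tendsto_atTop)
  obtain ⟨φ, hφ, μ, hμ, hw, hd⟩ := H _ _ (ha'.comp hb) hb'
  have h1 := hw (truncDist X ε hε)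
  have h0 : ∫ x, truncDist X ε hε x ∂μ = 0 := by
    have hae : ∀ᵐ p ∂μ, p.1 = p.2 :=
      (prob_compl_eq_zero_iff (isClosed_eq continuous_fst continuous_snd).measurableSet).2 hd
    refine integral_eq_zero_of_ae ?_
    filter_upwards [hae] with p hp
    simp [truncDist, hp, hε.le]
  rw [h0] at h1
  have hlow : ∀ k, ε * δ ≤ ∫ x, truncDist X ε hε x ∂(P.map (fun ω =>
      (Y (((n ∘ a) ∘ b) (φ k)) ω, Y (((m ∘ a) ∘ b) (φ k)) ω))) := by
    intro k
    have hpm := ((hY (((n ∘ a) ∘ b) (φ k))).prodMk (hY (((m ∘ a) ∘ b) (φ k))))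
    rw [integral_map hpm.aemeasurable
      (truncDist X ε hε).continuous.aestronglyMeasurable]
    have hmk := mul_meas_ge_le_integral_of_nonneg (μ := P) (f := fun ω =>
      truncDist X ε hε (Y (((n ∘ a) ∘ b) (φ k)) ω, Y (((m ∘ a) ∘ b) (φ k)) ω))
      (Eventually.of_forall fun ω => le_min hε.le dist_nonneg)
      (Integrable.of_bound
        ((truncDist X ε hε).continuous.measurable.comp hpm).aestronglyMeasurable
        ‖truncDist X ε hε‖
        (Eventually.of_forall fun ω => (truncDist X ε hε).norm_coe_le_norm _)) ε
    refine le_trans ?_ hmk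
    refine mul_le_mul_of_nonneg_left ?_ hε.le
    refine (hnm (a (b (φ k)))).le.trans (measureReal_mono ?_)
    intro ω hω
    simp only [Set.mem_ofPred_eq] at hω ⊢
    exact le_min le_rfl hω
  have := ge_of_tendsto' h1 hlow
  nlinarith [mul_pos hε hδ]

theorem gk_backward (P : Measure Ω) [IsProbabilityMeasure P]
    (Y : ℕ → Ω → X) (hY : ∀ n, Measurable (Y n))
    (H : ∀ ε δ : ℝ, 0 < ε → 0 < δ →
      ∃ N, ∀ n ≥ N, ∀ m ≥ N, P.real {ω | ε ≤ dist (Y n ω) (Y m ω)} ≤ δ) :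
    ∃ Z : Ω → X, TendstoInMeasure P Y atTop Z := by
  have : SecondCountableTopology X := UniformSpace.secondCountable_of_separable X
  have : Nonempty Ω := nonempty_of_isProbabilityMeasure P
  have : Nonempty X := ⟨Y 0 (Classical.arbitrary Ω)⟩
  have hev : ∀ k : ℕ, ∀ᶠ N in atTop, ∀ n ≥ N, ∀ m ≥ N,
      P.real {ω | (1 / 2 : ℝ) ^ k ≤ dist (Y n ω) (Y m ω)} ≤ (1 / 2 : ℝ) ^ k := by
    intro k
    obtain ⟨N, hN⟩ := H ((1 / 2 : ℝ) ^ k) ((1 / 2 : ℝ) ^ k) (by positivity) (by positivity)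
    filter_upwards [eventually_ge_atTop N] with M hM n hn m hm
    exact hN n (hM.trans hn) m (hM.trans hm)
  obtain ⟨φ, hφ, hφ'⟩ := extraction_forall_of_eventually hev
  have hsum : ∑' k, P {ω | (1 / 2 : ℝ) ^ k ≤ dist (Y (φ k) ω) (Y (φ (k + 1)) ω)} ≠ ⊤ := by
    have hle : ∀ k, P {ω | (1 / 2 : ℝ) ^ k ≤ dist (Y (φ k) ω) (Y (φ (k + 1)) ω)}
        ≤ ENNReal.ofReal ((1 / 2 : ℝ) ^ k) := by
      intro k
      rw [← ofReal_measureReal]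
      exact ENNReal.ofReal_le_ofReal (hφ' k _ le_rfl _ (hφ.monotone k.le_succ))
    exact ne_top_of_le_ne_top summable_geometric_two.tsum_ofReal_ne_top
      (ENNReal.tsum_le_tsum hle)
  have hconv : ∀ᵐ ω ∂P, ∃ x, Tendsto (fun k => Y (φ k) ω) atTop (𝓝 x) := by
    filter_upwards [ae_eventually_notMem hsum] with ω hω
    obtain ⟨K, hK⟩ := eventually_atTop.1 hω
    have hc : CauchySeq (fun k => Y (φ (k + K)) ω) := by
      refine cauchySeq_of_le_geometric (1 / 2 : ℝ) 1 (by norm_num) ?_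
      intro k
      have := hK (k + K) (by omega)
      simp only [Set.mem_ofPred_eq, not_le] at this
      rw [show k + 1 + K = k + K + 1 by omega, one_mul]
      exact this.le.trans (pow_le_pow_of_le_one (by norm_num) (by norm_num) (by omega))
    obtain ⟨x, hx⟩ := cauchySeq_tendsto_of_complete hc
    exact ⟨x, (tendsto_add_atTop_iff_nat (f := fun k => Y (φ k) ω) K).1 hx⟩
  let Z : Ω → X := fun ω => limUnder atTop (fun k => Y (φ k) ω)
  have hZ : ∀ᵐ ω ∂P, Tendsto (fun k => Y (φ k) ω) atTop (𝓝 (Z ω)) := by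
    filter_upwards [hconv] with ω hω
    exact tendsto_nhds_limUnder hω
  have hZm := tendstoInMeasure_of_tendsto_ae
    (fun k => (hY (φ k)).aestronglyMeasurable) hZ
  refine ⟨Z, ?_⟩
  rw [tendstoInMeasure_iff_measureReal_dist] at hZm ⊢
  intro ε hε
  rw [Metric.tendsto_atTop]
  intro δ hδ
  obtain ⟨N, hN⟩ := H (ε / 2) (δ / 3) (by positivity) (by positivity)
  have h1 := (hZm (ε / 2) (by positivity)).eventually_lt_const (show 0 < δ / 3 by positivity)
  obtain ⟨k, hk1, hk2⟩ := (h1.and (hφ.tendsto_atTop.eventually_ge_atTop N)).exists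
  refine ⟨N, fun n hn => ?_⟩
  rw [Real.dist_eq, sub_zero, abs_of_nonneg measureReal_nonneg]
  have h2 := hN n hn (φ k) hk2
  have hsub : {ω | ε ≤ dist (Y n ω) (Z ω)} ⊆
      {ω | ε / 2 ≤ dist (Y n ω) (Y (φ k) ω)} ∪ {ω | ε / 2 ≤ dist (Y (φ k) ω) (Z ω)} := by
    intro ω hω
    simp only [Set.mem_ofPred_eq, Set.mem_union] at hω ⊢
    by_contra! hcon
    linarith [dist_triangle (Y n ω) (Y (φ k) ω) (Z ω)]
  have h3 := (measureReal_mono (μ := P) hsub).trans (measureReal_union_le _ _)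
  linarith

end Helpers

/-- **Gyöngy–Krylov.** Let `X` be a complete separable metric space and `Y n` a sequence
of `X`-valued random variables with joint laws
`μ_{m,n}(E) = ℙ{(Y n, Y m) ∈ E}`.  Then `Y n` converges in probability iff every
subsequence of the joint laws has a further subsequence converging weakly to a
probability measure `μ` on `X × X` concentrated on the diagonal. -/
theorem gyongy_krylov
    {X : Type*} [MetricSpace X] [CompleteSpace X] [TopologicalSpace.SeparableSpace X]
    [MeasurableSpace X] [BorelSpace X]
    {Ω : Type*} [MeasurableSpace Ω] (P : Measure Ω) [IsProbabilityMeasure P]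
    (Y : ℕ → Ω → X) (hY : ∀ n, Measurable (Y n)) :
    (∃ Ylim : Ω → X, TendstoInMeasure P Y atTop Ylim) ↔
      (∀ nk mk : ℕ → ℕ, StrictMono nk → StrictMono mk →
        ∃ φ : ℕ → ℕ, StrictMono φ ∧
          ∃ μ : Measure (X × X), IsProbabilityMeasure μ ∧
            WeakTendsto
              (fun k => P.map (fun ω => (Y (nk (φ k)) ω, Y (mk (φ k)) ω))) μ ∧
            μ {p : X × X | p.1 = p.2} = 1) := by
  constructor
  · rintro ⟨Z, hZ⟩ nk mk hn hm
    exact gk_forward P Y hY Z hZ nk mk hn hm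
  · intro H
    exact gk_backward P Y hY (fun ε δ hε hδ => gk_cauchy P Y hY H ε δ hε hδ)

end Stmt17
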